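/- Let M ≥ 4 be an integer. Assume the polynomial Ĥe_{M-2} has M−2 distinct real roots λ̂_1 > λ̂_2 > ... > λ̂_{M-2} (listed in descending order). Define the (M−2)×(M−2) matrix R̂ by R̂_{ij} = Ĥe_{i-1}(λ̂_j)/(i+1)! for i, j = 1, ..., M−2, let R̂_+ be the submatrix of R̂ consisting of its first ⌊M/2⌋−1 columns, and let R̂_{+,even} be the (⌊M/2⌋−1)×(⌊M/2⌋−1) square submatrix of R̂_+ consisting of its rows with even row index i. Then R̂_{+,even} is invertible. -/

import Mathlib

open Polynomial Matrix

/-- Modified Hermite-type polynomials: Ĥe₀ = 1, Ĥe₁ = x,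
    Ĥe_{k+1} = x·Ĥe_k − (k+2)·Ĥe_{k−1} for k ≥ 1. -/
noncomputable def Hhat : ℕ → Polynomial ℝ
  | 0 => 1
  | 1 => Polynomial.X
  | (n + 2) => Polynomial.X * Hhat (n + 1) - Polynomial.C ((n : ℝ) + 3) * Hhat n

lemma aux_step {p q : ℝ[X]} (c : ℝ) {n : ℕ} (hp : p.Monic) (hpn : p.natDegree = n)
    (hq : q.natDegree < n) :
    (p - C c * q).Monic ∧ (p - C c * q).natDegree = n := by
  have h : (C c * q).degree < p.degree := by
    rw [Polynomial.degree_eq_natDegree hp.ne_zero, hpn]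
    refine lt_of_le_of_lt Polynomial.degree_le_natDegree ?_
    exact_mod_cast lt_of_le_of_lt (Polynomial.natDegree_C_mul_le c q) hq
  exact ⟨hp.sub_of_left h, by
    rw [Polynomial.natDegree_eq_of_degree_eq (Polynomial.degree_sub_eq_left_of_degree_lt h), hpn]⟩

lemma Hhat_monic (n : ℕ) : ((Hhat n).Monic ∧ (Hhat n).natDegree = n) ∧
    ((Hhat (n+1)).Monic ∧ (Hhat (n+1)).natDegree = n+1) := by
  induction n with
  | zero => simp [Hhat, Polynomial.monic_X]
  | succ n ih =>
    obtain ⟨⟨h1, h2⟩, h3, h4⟩ := ih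
    refine ⟨⟨h3, h4⟩, ?_⟩
    rw [Hhat]
    refine aux_step _ (Polynomial.monic_X.mul h3) ?_ (by omega)
    rw [Polynomial.monic_X.natDegree_mul h3, h4, Polynomial.natDegree_X]
    omega

lemma Hhat_neg (n : ℕ) (x : ℝ) : (Hhat n).eval (-x) = (-1)^n * (Hhat n).eval x ∧
    (Hhat (n+1)).eval (-x) = (-1)^(n+1) * (Hhat (n+1)).eval x := by
  induction n with
  | zero => simp [Hhat]
  | succ n ih =>
    refine ⟨ih.2, ?_⟩
    rw [Hhat]
    simp only [eval_sub, eval_mul, eval_X, eval_C, ih.1, ih.2]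
    ring

lemma Hhat_split (t : ℕ) : ∃ E O : ℝ[X], (E.Monic ∧ E.natDegree = t) ∧
    (O.Monic ∧ O.natDegree = t) ∧ (∀ x, (Hhat (2*t)).eval x = E.eval (x^2)) ∧
    (∀ x, (Hhat (2*t+1)).eval x = x * O.eval (x^2)) := by
  induction t with
  | zero => exact ⟨1, 1, by simp, by simp, by simp [Hhat], by simp [Hhat]⟩
  | succ t ih =>
    obtain ⟨E, O, ⟨hE, hEd⟩, ⟨hO, hOd⟩, h1, h2⟩ := ih
    have hXO : (X * O).natDegree = t + 1 := by
      rw [Polynomial.monic_X.natDegree_mul hO, hOd, Polynomial.natDegree_X]; omega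
    have hE' := aux_step (((2*t : ℕ):ℝ)+3) (Polynomial.monic_X.mul hO) hXO
      (show E.natDegree < t+1 by omega)
    have hO' := aux_step (((2*t+1 : ℕ):ℝ)+3) hE'.1 hE'.2 (show O.natDegree < t+1 by omega)
    have e1 : ∀ x, (Hhat (2*t+2)).eval x
        = (X * O - C (((2*t : ℕ):ℝ)+3) * E).eval (x^2) := by
      intro x
      rw [Hhat]
      simp only [eval_sub, eval_mul, eval_X, eval_C, h1, h2]
      ring
    refine ⟨_, _, hE', hO', e1, ?_⟩
    intro x
    show (Hhat (2*t+1+2)).eval x = _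
    rw [Hhat, eval_sub, eval_mul, eval_mul, e1, h2]
    simp only [eval_sub, eval_mul, eval_X, eval_C]
    ring

lemma lam_pos (n K : ℕ) (hK : 2 * K ≤ n) (lam : Fin n → ℝ)
    (hroot : ∀ j, (Hhat n).eval (lam j) = 0)
    (hdesc : ∀ i j : Fin n, i < j → lam j < lam i) (j : Fin n) (hj : (j : ℕ) < K) :
    0 < lam j := by
  by_contra hneg
  push Not at hneg
  have hanti : StrictAnti lam := fun i j h => hdesc i j h
  have hm := (Hhat_monic n).1
  have hsurj : ∀ x, (Hhat n).eval x = 0 → ∃ i, lam i = x := by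
    intro x hx
    by_contra hne
    push Not at hne
    have hsub : (insert x (Finset.univ.image lam)) ⊆ (Hhat n).roots.toFinset := by
      intro y hy
      rw [Multiset.mem_toFinset, Polynomial.mem_roots hm.1.ne_zero, Polynomial.IsRoot]
      rcases Finset.mem_insert.1 hy with rfl | hy
      · exact hx
      · obtain ⟨i, -, rfl⟩ := Finset.mem_image.1 hy
        exact hroot i
    have h1 := Finset.card_le_card hsub
    rw [Finset.card_insert_of_notMem (by simpa using hne),
      Finset.card_image_of_injective _ hanti.injective, Finset.card_univ, Fintype.card_fin] at h1
    have h2 := Multiset.toFinset_card_le (Hhat n).roots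
    have h3 := Polynomial.card_roots' (Hhat n)
    omega
  have hnegr : ∀ i, ∃ k, lam k = - lam i := fun i =>
    hsurj _ (by rw [(Hhat_neg n _).1, hroot, mul_zero])
  choose f hf using hnegr
  have hinj : Function.Injective f := by
    intro a b hab
    apply hanti.injective
    have := hf a
    rw [hab, hf b] at this
    linarith
  have hcard := Finset.card_le_card_of_injOn f (s := Finset.Ioi j) (t := Finset.Iio j)
    (by
      intro i hi
      have hi' : j < i := by simpa using hi
      have : lam i < lam j := hdesc _ _ hi'
      have h2 : lam j < lam (f i) := by rw [hf]; linarith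
      simpa using hanti.lt_iff_gt.1 h2) hinj.injOn
  rw [Fin.card_Ioi, Fin.card_Iio] at hcard
  omega

theorem Rhat_plus_even_invertible (M : ℕ) (hM : 4 ≤ M)
    (lam : Fin (M - 2) → ℝ)
    (hroot : ∀ j, (Hhat (M - 2)).eval (lam j) = 0)
    (hdesc : ∀ i j : Fin (M - 2), i < j → lam j < lam i) :
    (Matrix.of fun t j : Fin (M / 2 - 1) =>
        (Hhat (2 * (t : ℕ) + 1)).eval (lam (Fin.castLE (by omega) j)) /
          (Nat.factorial (2 * (t : ℕ) + 3) : ℝ)).det ≠ 0 := by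
  choose E O hE hO h1 h2 using Hhat_split
  set mu : Fin (M / 2 - 1) → ℝ := fun j => lam (Fin.castLE (by omega) j) with hmu
  have hpos : ∀ j, 0 < mu j := fun j =>
    lam_pos (M - 2) (M / 2 - 1) (by omega) lam hroot hdesc _ j.2
  have hinj : Function.Injective mu := by
    have hanti : StrictAnti lam := fun i j h => hdesc i j h
    exact hanti.injective.comp (Fin.castLE_injective _)
  have hv : (Matrix.vandermonde fun j => mu j ^ 2).det ≠ 0 := by
    rw [Matrix.det_vandermonde_ne_zero_iff]
    intro a b hab
    exact hinj ((sq_eq_sq₀ (hpos a).le (hpos b).le).1 hab)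
  rw [Matrix.det_eval_matrixOfPolynomials_eq_det_vandermonde _
    (fun t : Fin (M / 2 - 1) => O t) (fun t => (hO t).2) (fun t => (hO t).1)] at hv
  rw [← Matrix.det_transpose] at hv
  have key : (Matrix.of fun t j : Fin (M / 2 - 1) =>
        (Hhat (2 * (t : ℕ) + 1)).eval (mu j) / (Nat.factorial (2 * (t : ℕ) + 3) : ℝ))
      = Matrix.diagonal (fun t : Fin (M / 2 - 1) => ((Nat.factorial (2 * (t : ℕ) + 3) : ℝ))⁻¹)
        * (Matrix.of fun i j : Fin (M / 2 - 1) => (O j).eval (mu i ^ 2))ᵀ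
        * Matrix.diagonal mu := by
    ext t j
    rw [Matrix.mul_diagonal, Matrix.diagonal_mul]
    simp only [Matrix.of_apply, Matrix.transpose_apply, h2]
    ring
  rw [key, Matrix.det_mul, Matrix.det_mul, Matrix.det_diagonal, Matrix.det_diagonal]
  refine mul_ne_zero (mul_ne_zero ?_ hv) ?_
  · exact Finset.prod_ne_zero_iff.2 fun t _ =>
      inv_ne_zero (Nat.cast_ne_zero.2 (Nat.factorial_ne_zero _))
  · exact Finset.prod_ne_zero_iff.2 fun t _ => (hpos t).ne'
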